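/- arXiv:2404.06110 — 2 statements merged into one kernel-verified Lean document; each statement's English description precedes it below -/
import Mathlib

section
/- Let n ≥ 1 and let φ : X_c(ℝⁿ) → ℝ be an ℝ-linear map that is translation invariant, meaning φ([c,u]) = 0 for every constant vector field c ∈ ℝⁿ and every u ∈ X_c(ℝⁿ) (note that [c,u](x) = Du(x)(c) since c is constant). Then there exists b ∈ ℝⁿ such that φ(u) = ∑_{σ=1}^n b_σ ∫_{ℝⁿ} u^σ(x) dx for every u ∈ X_c(ℝⁿ), where u^1, …, u^n denote the component functions of u. -/
/-!
The content of the statement is the top-degree Poincaré lemma with compact supports: a compactly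
supported smooth field `u` is congruent, modulo directional derivatives of compactly supported smooth
fields, to `B • c`, where `B x = ∏ j, ρ (x j)` is a product of one-dimensional bumps with
`∫ ρ = 1` and `c` is a constant vector.

One coordinate is treated at a time. Let `P u x = ρ (x i) • ∫ u (x + r eᵢ) dr`. Then `u - P u` has
zero integral along every line parallel to `eᵢ`, so its primitive along `eᵢ` is again compactly
supported, and `u - P u = ∂ᵢ g` is a bracket `[eᵢ, g]` (`exists_lineProj_add_lieBracket`). Applying
`P` successively in all coordinates gives `B • c` (`exists_prod_bump_smul`).

Any additive functional that kills the brackets `[c, g]` thus takes the same value on `u` and on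
`B • c`. This applies to `φ`, and also to `u ↦ ∫ u^σ`; the latter identifies `c σ` as
`(∫ u^σ) / ∫ B` without any use of Fubini's theorem. Hence `b σ = φ (B • e_σ) / ∫ B`.
-/

open MeasureTheory

noncomputable section

/-- A compactly supported smooth vector field on `ℝⁿ`, viewed as a smooth map `ℝⁿ → ℝⁿ`
with compact support. -/
def IsCompactlySupportedVF {n : ℕ}
    (u : EuclideanSpace ℝ (Fin n) → EuclideanSpace ℝ (Fin n)) : Prop :=
  ContDiff ℝ (⊤ : ℕ∞) u ∧ HasCompactSupport u

namespace TranslationInvariant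

/-- Euclidean space `ℝⁿ`. -/
abbrev Euc (n : ℕ) : Type := EuclideanSpace ℝ (Fin n)

/-- The `i`-th standard basis vector. -/
abbrev basisVec {n : ℕ} (i : Fin n) : Euc n := EuclideanSpace.single i (1 : ℝ)

variable {n : ℕ}

/-! ### Supports and line integrals -/

lemma abs_apply_le (x : Euc n) (j : Fin n) : |x j| ≤ ‖x‖ := by
  simpa using PiLp.norm_apply_le x j

lemma exists_box {w : Euc n → Euc n} (hw : HasCompactSupport w) :
    ∃ R : ℝ, ∀ x, ∀ j, R < |x j| → w x = 0 := by
  obtain ⟨R, hR⟩ := hw.isCompact.isBounded.exists_norm_le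
  refine ⟨R, fun x j hj => ?_⟩
  by_contra h
  have := hR x (subset_tsupport _ h)
  linarith [abs_apply_le x j]

lemma hasCompactSupport_of_box {F : Type*} [Zero F] {w : Euc n → F} (R : ℝ)
    (h : ∀ x, ∀ j, R < |x j| → w x = 0) : HasCompactSupport w := by
  have hK : IsCompact ((WithLp.toLp 2 : (Fin n → ℝ) → Euc n) ''
      Set.Icc (fun _ => -R) (fun _ => R)) :=
    isCompact_Icc.image (PiLp.continuous_toLp 2 _)
  refine HasCompactSupport.intro hK fun x hx => ?_
  by_contra hne
  refine hx ⟨x.ofLp, ?_, rfl⟩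
  have hb : ∀ j, |x j| ≤ R := fun j => not_lt.1 fun hj => hne (h x j hj)
  exact ⟨fun j => (abs_le.1 (hb j)).1, fun j => (abs_le.1 (hb j)).2⟩

lemma line_apply_self (x : Euc n) (i : Fin n) (r : ℝ) : (x + r • basisVec i) i = x i + r := by
  simp

lemma line_apply_ne (x : Euc n) {i j : Fin n} (h : j ≠ i) (r : ℝ) :
    (x + r • basisVec i) j = x j := by
  simp [h]

lemma hasCompactSupport_line {w : Euc n → Euc n} (hw : HasCompactSupport w) (i : Fin n)
    (x : Euc n) : HasCompactSupport fun r : ℝ => w (x + r • basisVec i) := by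
  obtain ⟨R, hR⟩ := exists_box hw
  refine HasCompactSupport.intro (isCompact_Icc (a := -R - x i) (b := R - x i)) fun r hr => ?_
  apply hR _ i
  rw [line_apply_self]
  by_contra hc
  obtain ⟨h1, h2⟩ := abs_le.1 (not_lt.1 hc)
  exact hr ⟨by linarith, by linarith⟩

lemma continuous_line {w : Euc n → Euc n} (hw : Continuous w) (i : Fin n) (x : Euc n) :
    Continuous fun r : ℝ => w (x + r • basisVec i) := by
  fun_prop

lemma integrable_line {w : Euc n → Euc n} (hw : IsCompactlySupportedVF w) (i : Fin n)
    (x : Euc n) : Integrable fun r : ℝ => w (x + r • basisVec i) :=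
  (continuous_line hw.1.continuous i x).integrable_of_hasCompactSupport
    (hasCompactSupport_line hw.2 i x)

/-- Weighted line integrals of a compactly supported smooth field depend smoothly on the base
point: they are convolutions with parameter, evaluated at `0`. The support of the parametrised
function is locally uniform in the parameter. -/
lemma contDiff_lineIntegral {f : ℝ → ℝ} (hf : LocallyIntegrable (fun r => f (-r)) volume)
    {w : Euc n → Euc n} (hw : IsCompactlySupportedVF w) (i : Fin n) :
    ContDiff ℝ (⊤ : ℕ∞) fun x => ∫ r, f r • w (x + r • basisVec i) := by
  obtain ⟨R, hR⟩ := exists_box hw.2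
  rw [contDiff_iff_contDiffAt]
  intro x₀
  have key := contDiffOn_convolution_right_with_param_comp (𝕜 := ℝ) (μ := volume) (n := (⊤ : ℕ∞))
    (ContinuousLinearMap.lsmul ℝ ℝ : ℝ →L[ℝ] Euc n →L[ℝ] Euc n)
    (s := Metric.ball (0 : Euc n) (‖x₀‖ + 1)) (v := fun _ => (0 : ℝ)) contDiffOn_const
    (f := fun r => f (-r)) (g := fun p r => w (p + r • basisVec i))
    (k := Set.Icc (-(R + (‖x₀‖ + 1))) (R + (‖x₀‖ + 1))) Metric.isOpen_ball isCompact_Icc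
    (by
      intro p r hp hr
      apply hR _ i
      rw [line_apply_self]
      by_contra hc
      obtain ⟨h1, h2⟩ := abs_le.1 (not_lt.1 hc)
      have h3 : ‖p‖ < ‖x₀‖ + 1 := by simpa using hp
      obtain ⟨h4, h5⟩ := abs_le.1 (abs_apply_le p i)
      exact hr ⟨by linarith, by linarith⟩)
    hf
    (by
      apply ContDiff.contDiffOn
      have h1 : ContDiff ℝ (⊤ : ℕ∞) fun q : Euc n × ℝ => q.1 + q.2 • basisVec i := by fun_prop
      exact hw.1.comp h1)
  have heq : (fun x => ∫ r, f r • w (x + r • basisVec i)) = fun x =>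
      convolution (fun r => f (-r)) (fun r => w (x + r • basisVec i))
        (ContinuousLinearMap.lsmul ℝ ℝ : ℝ →L[ℝ] Euc n →L[ℝ] Euc n) volume 0 := by
    funext x
    rw [convolution_def, ← integral_neg_eq_self]
    simp
  rw [heq]
  exact key.contDiffAt (Metric.isOpen_ball.mem_nhds (by simp))

/-- The primitive of `w` along the `i`-th coordinate, vanishing at `-∞`. -/
def linePrim (i : Fin n) (w : Euc n → Euc n) (x : Euc n) : Euc n :=
  ∫ r in Set.Iic (0 : ℝ), w (x + r • basisVec i)

lemma contDiff_linePrim {w : Euc n → Euc n} (hw : IsCompactlySupportedVF w) (i : Fin n) :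
    ContDiff ℝ (⊤ : ℕ∞) (linePrim i w) := by
  have hf : LocallyIntegrable (fun r : ℝ => (Set.Iic (0 : ℝ)).indicator (fun _ => (1 : ℝ)) (-r))
      volume := by
    have : (fun r : ℝ => (Set.Iic (0 : ℝ)).indicator (fun _ => (1 : ℝ)) (-r)) =
        (Set.Ici (0 : ℝ)).indicator (fun _ => (1 : ℝ)) := by
      funext r
      simp [Set.indicator]
    rw [this]
    exact (locallyIntegrable_const 1).indicator measurableSet_Ici
  convert contDiff_lineIntegral hf hw i using 2 with x
  rw [linePrim, ← integral_indicator measurableSet_Iic]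
  congr 1
  funext r
  by_cases h : r ∈ Set.Iic (0 : ℝ) <;> simp [Set.indicator, h]

lemma linePrim_line (i : Fin n) (w : Euc n → Euc n) (x : Euc n) (s : ℝ) :
    linePrim i w (x + s • basisVec i) = ∫ r in Set.Iic s, w (x + r • basisVec i) := by
  rw [linePrim, ← integral_indicator measurableSet_Iic, ← integral_indicator measurableSet_Iic,
    ← integral_add_right_eq_self _ (-s)]
  congr 1
  funext r
  by_cases h : r ≤ s
  · simp [Set.indicator, h, add_smul, add_assoc]
  · simp [Set.indicator, h]

lemma fderiv_linePrim {w : Euc n → Euc n} (hw : IsCompactlySupportedVF w) (i : Fin n)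
    (x : Euc n) : fderiv ℝ (linePrim i w) x (basisVec i) = w x := by
  have hd : DifferentiableAt ℝ (linePrim i w) x :=
    (contDiff_linePrim hw i).differentiable (by simp) x
  have h1 : HasDerivAt (fun s : ℝ => linePrim i w (x + s • basisVec i))
      (fderiv ℝ (linePrim i w) x (basisVec i)) 0 :=
    hd.hasFDerivAt.hasLineDerivAt (basisVec i)
  have hc := continuous_line hw.1.continuous i x
  have hint := integrable_line hw i x
  have h2 : HasDerivAt (fun s : ℝ => linePrim i w (x + s • basisVec i)) (w x) 0 := by
    have h3 : (fun s : ℝ => linePrim i w (x + s • basisVec i)) = fun s =>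
        (∫ r in (0 : ℝ)..s, w (x + r • basisVec i)) +
          ∫ r in Set.Iic (0 : ℝ), w (x + r • basisVec i) := by
      funext s
      rw [linePrim_line, ← intervalIntegral.integral_Iic_sub_Iic hint.integrableOn
        hint.integrableOn, sub_add_cancel]
    rw [h3]
    apply HasDerivAt.add_const
    have := intervalIntegral.integral_hasDerivAt_right (hc.intervalIntegrable (0 : ℝ) 0)
      (hc.stronglyMeasurableAtFilter _ _) hc.continuousAt
    simpa using this
  exact h1.unique h2

/-- The primitive is compactly supported exactly because the total integral over each line
vanishes. -/
lemma hasCompactSupport_linePrim {w : Euc n → Euc n} (hw : IsCompactlySupportedVF w) (i : Fin n)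
    (h0 : ∀ x, ∫ r : ℝ, w (x + r • basisVec i) = 0) : HasCompactSupport (linePrim i w) := by
  obtain ⟨R, hR⟩ := exists_box hw.2
  refine hasCompactSupport_of_box R fun x j hj => ?_
  by_cases hji : j = i
  · subst hji
    rcases lt_abs.1 hj with h | h
    · -- Beyond the support on the positive side the primitive equals the full line integral.
      rw [linePrim, ← h0 x]
      apply setIntegral_eq_integral_of_forall_compl_eq_zero
      intro r hr
      apply hR _ j
      rw [line_apply_self]
      exact lt_abs.2 (Or.inl (by linarith [not_le.1 (Set.mem_Iic.not.1 hr)]))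
    · apply setIntegral_eq_zero_of_forall_eq_zero
      intro r hr
      apply hR _ j
      rw [line_apply_self]
      exact lt_abs.2 (Or.inr (by linarith [Set.mem_Iic.1 hr]))
  · apply setIntegral_eq_zero_of_forall_eq_zero
    intro r _
    apply hR _ j
    rwa [line_apply_ne x hji]

/-! ### The projection in one coordinate -/

/-- A fixed smooth bump function on `ℝ` with integral `1`. -/
def rho : ℝ → ℝ := (⟨1, 2, one_pos, one_lt_two⟩ : ContDiffBump (0 : ℝ)).normed volume

lemma contDiff_rho : ContDiff ℝ (⊤ : ℕ∞) rho := ContDiffBump.contDiff_normed _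

lemma integral_rho : ∫ t, rho t = 1 := ContDiffBump.integral_normed _

lemma rho_nonneg (t : ℝ) : 0 ≤ rho t := ContDiffBump.nonneg_normed _ t

lemma support_rho : Function.support rho = Metric.ball 0 2 := ContDiffBump.support_normed_eq _

lemma rho_zero_ne : rho 0 ≠ 0 := by
  have : (0 : ℝ) ∈ Function.support rho := by simp [support_rho]
  exact this

lemma rho_eq_zero {t : ℝ} (h : 2 < |t|) : rho t = 0 := by
  by_contra hne
  have : t ∈ Function.support rho := hne
  rw [support_rho] at this
  have : |t| < 2 := by simpa using this
  linarith

/-- Integrate out the `i`-th coordinate and spread the result with the bump `rho`. -/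
def lineProj (i : Fin n) (w : Euc n → Euc n) (x : Euc n) : Euc n :=
  rho (x i) • ∫ r : ℝ, w (x + r • basisVec i)

lemma integral_line_line (i : Fin n) (w : Euc n → Euc n) (x : Euc n) (s : ℝ) :
    ∫ r : ℝ, w (x + s • basisVec i + r • basisVec i) = ∫ r : ℝ, w (x + r • basisVec i) := by
  rw [← integral_add_left_eq_self (fun r : ℝ => w (x + r • basisVec i)) s]
  simp only [add_smul, add_assoc]

lemma isCompactlySupportedVF_lineProj {w : Euc n → Euc n} (hw : IsCompactlySupportedVF w)
    (i : Fin n) : IsCompactlySupportedVF (lineProj i w) := by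
  constructor
  · have h1 := contDiff_lineIntegral (f := fun _ => 1) (locallyIntegrable_const 1) hw i
    simp only [one_smul] at h1
    have h2 : ContDiff ℝ (⊤ : ℕ∞) fun x : Euc n => rho (x i) :=
      contDiff_rho.comp (by fun_prop)
    exact h2.smul h1
  · obtain ⟨R, hR⟩ := exists_box hw.2
    refine hasCompactSupport_of_box (max R 2) fun x j hj => ?_
    by_cases hji : j = i
    · subst hji
      rw [lineProj, rho_eq_zero ((le_max_right _ _).trans_lt hj), zero_smul]
    · have : ∀ r : ℝ, w (x + r • basisVec i) = 0 := fun r => by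
        apply hR _ j
        rw [line_apply_ne x hji]
        exact (le_max_left _ _).trans_lt hj
      simp [lineProj, this]

lemma integral_lineProj (i : Fin n) (w : Euc n → Euc n) (x : Euc n) :
    ∫ r : ℝ, lineProj i w (x + r • basisVec i) = ∫ r : ℝ, w (x + r • basisVec i) := by
  simp only [lineProj, integral_line_line, line_apply_self]
  rw [integral_smul_const, integral_add_left_eq_self rho, integral_rho, one_smul]

lemma IsCompactlySupportedVF.sub {u v : Euc n → Euc n} (hu : IsCompactlySupportedVF u)
    (hv : IsCompactlySupportedVF v) : IsCompactlySupportedVF (u - v) :=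
  ⟨hu.1.sub hv.1, hu.2.sub hv.2⟩

lemma lieBracket_const (c : Euc n) (u : Euc n → Euc n) :
    VectorField.lieBracket ℝ (fun _ ↦ c) u = fun x => fderiv ℝ u x c := by
  funext x
  simp [VectorField.lieBracket]

lemma IsCompactlySupportedVF.lieBracket {u : Euc n → Euc n} (hu : IsCompactlySupportedVF u)
    (c : Euc n) : IsCompactlySupportedVF (VectorField.lieBracket ℝ (fun _ ↦ c) u) := by
  rw [lieBracket_const]
  exact ⟨(hu.1.fderiv_right (m := (⊤ : ℕ∞)) (by simp)).clm_apply contDiff_const,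
    hu.2.fderiv_apply ℝ c⟩

lemma exists_lineProj_add_lieBracket {w : Euc n → Euc n} (hw : IsCompactlySupportedVF w)
    (i : Fin n) : ∃ g, IsCompactlySupportedVF g ∧
      w = lineProj i w + VectorField.lieBracket ℝ (fun _ ↦ basisVec i) g := by
  have hP := isCompactlySupportedVF_lineProj hw i
  have hq := IsCompactlySupportedVF.sub hw hP
  have h0 : ∀ x, ∫ r : ℝ, (w - lineProj i w) (x + r • basisVec i) = 0 := fun x => by
    simp only [Pi.sub_apply]
    rw [integral_sub (integrable_line hw i x) (integrable_line hP i x), integral_lineProj,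
      sub_self]
  refine ⟨linePrim i (w - lineProj i w),
    ⟨contDiff_linePrim hq i, hasCompactSupport_linePrim hq i h0⟩, ?_⟩
  funext x
  rw [lieBracket_const, Pi.add_apply, fderiv_linePrim hq]
  simp

/-! ### Functionals killing brackets with constant fields -/

/-- A functional on vector fields, additive on compactly supported ones, which vanishes on all
brackets `[c, u]` with `c` constant. -/
structure IsInvariant (L : (Euc n → Euc n) → ℝ) : Prop where
  add : ∀ u v, IsCompactlySupportedVF u → IsCompactlySupportedVF v → L (u + v) = L u + L v
  bracket : ∀ c u, IsCompactlySupportedVF u → L (VectorField.lieBracket ℝ (fun _ ↦ c) u) = 0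

/-- After projecting in the coordinates of `S`, the field is a product of bumps in these
coordinates times a function `h` independent of them. No regularity of `h` is needed. -/
lemma exists_partial {u : Euc n → Euc n} (hu : IsCompactlySupportedVF u) (S : Finset (Fin n)) :
    ∃ v h : Euc n → Euc n, IsCompactlySupportedVF v ∧ (∀ L, IsInvariant L → L u = L v) ∧
      (∀ x, v x = (∏ j ∈ S, rho (x j)) • h x) ∧
      ∀ j ∈ S, ∀ x (s : ℝ), h (x + s • basisVec j) = h x := by
  classical
  induction S using Finset.induction_on with
  | empty => exact ⟨u, u, hu, fun _ _ => rfl, by simp, by simp⟩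
  | insert i S hi ih =>
    obtain ⟨v, h, hv, hL, hvh, hh⟩ := ih
    refine ⟨lineProj i v, fun x => ∫ r : ℝ, h (x + r • basisVec i),
      isCompactlySupportedVF_lineProj hv i, ?_, ?_, ?_⟩
    · intro L hLi
      obtain ⟨g, hg, hvg⟩ := exists_lineProj_add_lieBracket hv i
      rw [hL L hLi]
      conv_lhs => rw [hvg]
      rw [hLi.add _ _ (isCompactlySupportedVF_lineProj hv i)
        (IsCompactlySupportedVF.lieBracket hg _), hLi.bracket _ _ hg, add_zero]
    · intro x
      have hprod : ∀ r : ℝ, ∏ j ∈ S, rho ((x + r • basisVec i) j) = ∏ j ∈ S, rho (x j) :=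
        fun r => Finset.prod_congr rfl fun j hj => by
          rw [line_apply_ne x (ne_of_mem_of_not_mem hj hi)]
      rw [lineProj, Finset.prod_insert hi, mul_smul]
      congr 1
      simp only [hvh, hprod]
      rw [integral_smul]
    · intro j hj x s
      rcases Finset.mem_insert.1 hj with rfl | hj
      · exact integral_line_line j h x s
      · refine integral_congr_ae (.of_forall fun r => ?_)
        change h (x + s • basisVec j + r • basisVec i) = h (x + r • basisVec i)
        rw [add_right_comm, hh j hj]

/-- The product bump function on `ℝⁿ`. -/
def bump (x : Euc n) : ℝ := ∏ j, rho (x j)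

lemma exists_prod_bump_smul {u : Euc n → Euc n} (hu : IsCompactlySupportedVF u) :
    ∃ c : Euc n, ∀ L, IsInvariant L → L u = L fun x => bump x • c := by
  classical
  obtain ⟨v, h, -, hL, hvh, hh⟩ := exists_partial hu Finset.univ
  have hconst : ∀ x, h x = h 0 := by
    intro x
    have h1 : ∀ S : Finset (Fin n), h (∑ j ∈ S, x j • basisVec j) = h 0 := by
      intro S
      induction S using Finset.induction_on with
      | empty => simp
      | insert i S hi ih => rw [Finset.sum_insert hi, add_comm, hh i (Finset.mem_univ i), ih]
    have h2 : x = ∑ j, x j • basisVec j := by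
      ext k
      simp [Finset.sum_apply, Pi.single_apply]
    rw [h2]
    exact h1 _
  refine ⟨h 0, fun L hLi => ?_⟩
  rw [hL L hLi]
  congr 1
  funext x
  rw [hvh, hconst x, bump]

lemma contDiff_bump : ContDiff ℝ (⊤ : ℕ∞) (bump : Euc n → ℝ) := by
  unfold bump
  exact contDiff_prod fun j _ => contDiff_rho.comp (by fun_prop)

lemma hasCompactSupport_bump : HasCompactSupport (bump : Euc n → ℝ) :=
  hasCompactSupport_of_box 2 fun _ j hj =>
    Finset.prod_eq_zero (Finset.mem_univ j) (rho_eq_zero hj)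

lemma integral_bump_pos : 0 < ∫ x : Euc n, bump x := by
  refine contDiff_bump.continuous.integral_pos_of_hasCompactSupport_nonneg_nonzero (x := 0)
    hasCompactSupport_bump (fun x => Finset.prod_nonneg fun j _ => rho_nonneg _) ?_
  simp [bump, rho_zero_ne]

lemma isCompactlySupportedVF_bump_smul (c : Euc n) :
    IsCompactlySupportedVF fun x : Euc n => bump x • c :=
  ⟨contDiff_bump.smul contDiff_const, hasCompactSupport_bump.smul_right⟩

lemma isInvariant_integral (σ : Fin n) :
    IsInvariant fun u : Euc n → Euc n => ∫ x, u x σ := by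
  have hint : ∀ u : Euc n → Euc n, IsCompactlySupportedVF u →
      Integrable fun x => u x σ := fun u hu =>
    (EuclideanSpace.proj (𝕜 := ℝ) σ).integrable_comp
      (hu.1.continuous.integrable_of_hasCompactSupport hu.2)
  refine ⟨fun u v hu hv => ?_, fun c u hu => ?_⟩
  · simpa using integral_add (hint u hu) (hint v hv)
  · have hd : Differentiable ℝ u := hu.1.differentiable (by simp)
    have h1 : ∀ x, fderiv ℝ (fun y => u y σ) x c = fderiv ℝ u x c σ := fun x => by
      have := ((EuclideanSpace.proj (𝕜 := ℝ) σ : Euc n →L[ℝ] ℝ).hasFDerivAt.comp x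
        (hd x).hasFDerivAt).fderiv
      exact congrArg (fun A : Euc n →L[ℝ] ℝ => A c) this
    have hi := hint _ (IsCompactlySupportedVF.lieBracket hu c)
    rw [lieBracket_const] at hi ⊢
    simp only [← h1] at hi ⊢
    -- Integration by parts against the constant function `1`.
    have := integral_mul_fderiv_eq_neg_fderiv_mul_of_integrable (μ := (volume : Measure (Euc n)))
      (f := fun _ => (1 : ℝ)) (g := fun y => u y σ) (v := c) (by simp) (by simpa using hi)
      (by simpa using hint u hu) (fun x _ => by fun_prop) (fun x _ => by fun_prop)
    simpa using this

end TranslationInvariant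

open TranslationInvariant in
/-- A translation-invariant linear functional on `𝔛_c(ℝⁿ)` is given by integration of the
components against a fixed covector: `φ(u) = ∑_σ b_σ ∫ u^σ`. -/
theorem translation_invariant_functional_eq_integral (n : ℕ) (hn : 1 ≤ n)
    (φ : (EuclideanSpace ℝ (Fin n) → EuclideanSpace ℝ (Fin n)) → ℝ)
    (hadd : ∀ u v, IsCompactlySupportedVF u → IsCompactlySupportedVF v →
      φ (u + v) = φ u + φ v)
    (hsmul : ∀ (c : ℝ) u, IsCompactlySupportedVF u → φ (c • u) = c * φ u)
    (hinv : ∀ (c : EuclideanSpace ℝ (Fin n)) (u : EuclideanSpace ℝ (Fin n) → EuclideanSpace ℝ (Fin n)),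
      IsCompactlySupportedVF u → φ (VectorField.lieBracket ℝ (fun _ ↦ c) u) = 0) :
    ∃ b : Fin n → ℝ, ∀ u, IsCompactlySupportedVF u →
      φ u = ∑ σ : Fin n, b σ * ∫ x, u x σ := by
  classical
  -- The functional `c ↦ φ (B • c)` is a linear form on `ℝⁿ`.
  let ψ : Euc n →ₗ[ℝ] ℝ :=
    { toFun := fun c => φ fun x => bump x • c
      map_add' := fun c d => by
        rw [← hadd _ _ (isCompactlySupportedVF_bump_smul c) (isCompactlySupportedVF_bump_smul d)]
        congr 1
        funext x
        simp
      map_smul' := fun a c => by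
        rw [RingHom.id_apply, smul_eq_mul, ← hsmul a _ (isCompactlySupportedVF_bump_smul c)]
        congr 1
        funext x
        exact smul_comm _ _ _ }
  refine ⟨fun σ => ψ (basisVec σ) / ∫ x : Euc n, bump x, fun u hu => ?_⟩
  obtain ⟨c, hc⟩ := exists_prod_bump_smul hu
  have h1 : φ u = ψ c := hc φ ⟨hadd, hinv⟩
  have h2 : ∀ σ, ∫ x, u x σ = (∫ x : Euc n, bump x) * c σ := fun σ => by
    rw [hc _ (isInvariant_integral σ), ← integral_mul_const]
    simp
  have h3 : c = ∑ σ, c σ • basisVec σ := by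
    ext k
    simp [Finset.sum_apply, Pi.single_apply]
  have hB : (∫ x : Euc n, bump x) ≠ 0 := integral_bump_pos.ne'
  rw [h1]
  conv_lhs => rw [h3, map_sum]
  refine Finset.sum_congr rfl fun σ _ => ?_
  rw [h2, map_smul, smul_eq_mul]
  field_simp
end
end

section
/- Let n ≥ 1 and let φ : X_c(ℝⁿ) → ℝ be an ℝ-linear map that is translation invariant, meaning φ([c,u]) = 0 for every constant vector field c ∈ ℝⁿ and every u ∈ X_c(ℝⁿ). Then, with E the Euler vector field E(x) = x, one has φ([E,u]) = −(n+1)·φ(u) for every u ∈ X_c(ℝⁿ). (Equivalently, the Euler vector field acts on translation-invariant linear functionals on X_c(ℝⁿ) by the scalar n+1.) -/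
/-!
In coordinates, `[E, u] = ∑ᵢ xᵢ ∂ᵢu - u`, while the Leibniz rule gives
`∑ᵢ [eᵢ, xᵢ u] = ∑ᵢ ∂ᵢ(xᵢ u) = n u + ∑ᵢ xᵢ ∂ᵢu`. Hence `[E, u] = ∑ᵢ [eᵢ, xᵢ u] - (n + 1) u`
(`lieBracket_id_eq_sum`). Each `xᵢ u` is smooth with compact support, so a translation-invariant
functional kills the sum and only the term `-(n + 1) u` contributes; no continuity of the
functional is needed.
-/

open MeasureTheory

noncomputable section

theorem IsCompactlySupportedVF.coord_smul {n : ℕ}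
    {u : EuclideanSpace ℝ (Fin n) → EuclideanSpace ℝ (Fin n)} (hu : IsCompactlySupportedVF u)
    (i : Fin n) : IsCompactlySupportedVF (fun x ↦ x i • u x) := by
  have h : ContDiff ℝ (⊤ : ℕ∞) fun x : EuclideanSpace ℝ (Fin n) ↦ x i := by fun_prop
  exact ⟨h.smul hu.1, HasCompactSupport.smul_left (f := fun x : EuclideanSpace ℝ (Fin n) ↦ x i)
    (f' := u) hu.2⟩

theorem IsCompactlySupportedVF.const_smul {n : ℕ}
    {u : EuclideanSpace ℝ (Fin n) → EuclideanSpace ℝ (Fin n)} (hu : IsCompactlySupportedVF u)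
    (c : ℝ) : IsCompactlySupportedVF (c • u) :=
  ⟨contDiff_const.smul hu.1, hu.2.smul_left (f := fun _ ↦ c)⟩

theorem IsCompactlySupportedVF.add {n : ℕ}
    {u v : EuclideanSpace ℝ (Fin n) → EuclideanSpace ℝ (Fin n)} (hu : IsCompactlySupportedVF u)
    (hv : IsCompactlySupportedVF v) : IsCompactlySupportedVF (u + v) :=
  ⟨hu.1.add hv.1, hu.2.add hv.2⟩

theorem IsCompactlySupportedVF.zero {n : ℕ} :
    IsCompactlySupportedVF (0 : EuclideanSpace ℝ (Fin n) → EuclideanSpace ℝ (Fin n)) :=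
  ⟨contDiff_const, HasCompactSupport.zero⟩

theorem IsCompactlySupportedVF.lieBracket_const {n : ℕ}
    {u : EuclideanSpace ℝ (Fin n) → EuclideanSpace ℝ (Fin n)} (hu : IsCompactlySupportedVF u)
    (c : EuclideanSpace ℝ (Fin n)) :
    IsCompactlySupportedVF (VectorField.lieBracket ℝ (fun _ ↦ c) u) := by
  have h : VectorField.lieBracket ℝ (fun _ ↦ c) u = fun x ↦ fderiv ℝ u x c := by
    ext1 x
    simp [VectorField.lieBracket]
  rw [h]
  exact ⟨(hu.1.fderiv_right (m := (⊤ : ℕ∞)) (by simp)).clm_apply contDiff_const,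
    hu.2.fderiv_apply (𝕜 := ℝ) c⟩

theorem lieBracket_id_eq_sum {n : ℕ}
    {u : EuclideanSpace ℝ (Fin n) → EuclideanSpace ℝ (Fin n)} (hu : IsCompactlySupportedVF u) :
    VectorField.lieBracket ℝ (fun x ↦ x) u =
      (∑ i : Fin n, VectorField.lieBracket ℝ (fun _ ↦ EuclideanSpace.single i (1 : ℝ))
        (fun x ↦ x i • u x)) + (-((n : ℝ) + 1)) • u := by
  ext1 x
  have hd : DifferentiableAt ℝ u x := hu.1.differentiable (by simp) x
  have hterm (i : Fin n) : VectorField.lieBracket ℝ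
      (fun _ ↦ EuclideanSpace.single i (1 : ℝ)) (fun x ↦ x i • u x) x =
      x i • fderiv ℝ u x (EuclideanSpace.single i (1 : ℝ)) + u x := by
    have h := ((EuclideanSpace.proj i : EuclideanSpace ℝ (Fin n) →L[ℝ] ℝ).hasFDerivAt
      (x := x)).smul hd.hasFDerivAt
    have h' : fderiv ℝ (fun x : EuclideanSpace ℝ (Fin n) ↦ x i • u x) x = _ := h.fderiv
    simp [VectorField.lieBracket, h']
  have hx : x = ∑ i : Fin n, x i • EuclideanSpace.single i (1 : ℝ) := by
    simpa using ((EuclideanSpace.basisFun (Fin n) ℝ).sum_repr x).symm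
  have hsum : fderiv ℝ u x x =
      ∑ i : Fin n, x i • fderiv ℝ u x (EuclideanSpace.single i (1 : ℝ)) := by
    conv_lhs => rw [hx, map_sum]
    simp only [map_smul, ← hx]
  simp only [Pi.add_apply, Finset.sum_apply, Pi.smul_apply, hterm, Finset.sum_add_distrib,
    ← hsum]
  simp only [VectorField.lieBracket, fderiv_fun_id, ContinuousLinearMap.id_apply,
    Finset.sum_const, Finset.card_univ, Fintype.card_fin, ← Nat.cast_smul_eq_nsmul ℝ]
  module

/-- The Euler vector field acts on translation-invariant linear functionals on `𝔛_c(ℝⁿ)` by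
the scalar `n+1`: for translation-invariant `φ` one has `φ([E,u]) = -(n+1)·φ(u)`. -/
theorem euler_acts_on_translation_invariant_functional (n : ℕ) (hn : 1 ≤ n)
    (φ : (EuclideanSpace ℝ (Fin n) → EuclideanSpace ℝ (Fin n)) → ℝ)
    (hadd : ∀ u v, IsCompactlySupportedVF u → IsCompactlySupportedVF v →
      φ (u + v) = φ u + φ v)
    (hsmul : ∀ (c : ℝ) u, IsCompactlySupportedVF u → φ (c • u) = c * φ u)
    (hinv : ∀ (c : EuclideanSpace ℝ (Fin n)) (u : EuclideanSpace ℝ (Fin n) → EuclideanSpace ℝ (Fin n)),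
      IsCompactlySupportedVF u → φ (VectorField.lieBracket ℝ (fun _ ↦ c) u) = 0) :
    ∀ u, IsCompactlySupportedVF u →
      φ (VectorField.lieBracket ℝ (fun x ↦ x) u) = -((n : ℝ) + 1) * φ u := by
  intro u hu
  have hsum (s : Finset (Fin n)) :
      IsCompactlySupportedVF (∑ i ∈ s, VectorField.lieBracket ℝ
        (fun _ ↦ EuclideanSpace.single i (1 : ℝ)) (fun x ↦ x i • u x)) ∧
      φ (∑ i ∈ s, VectorField.lieBracket ℝ
        (fun _ ↦ EuclideanSpace.single i (1 : ℝ)) (fun x ↦ x i • u x)) = 0 := by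
    induction s using Finset.induction_on with
    | empty =>
      refine ⟨by simpa using IsCompactlySupportedVF.zero, ?_⟩
      simpa using hsmul 0 0 IsCompactlySupportedVF.zero
    | insert i s hi ih =>
      have hb := (hu.coord_smul i).lieBracket_const (EuclideanSpace.single i (1 : ℝ))
      rw [Finset.sum_insert hi]
      exact ⟨hb.add ih.1, by rw [hadd _ _ hb ih.1, hinv _ _ (hu.coord_smul i), ih.2, add_zero]⟩
  rw [lieBracket_id_eq_sum hu, hadd _ _ (hsum Finset.univ).1 (hu.const_smul _),
    (hsum Finset.univ).2, hsmul _ _ hu, zero_add]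
end
end
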